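/- Let $N \ge 1$, let $y_0, y \in \mathbb{R}^N \setminus \{0\}$, and let $\kappa, \vartheta > 0$ satisfy $\kappa + 2\vartheta > N$. Set $\tau := \min\{\kappa, 2\vartheta, \kappa + 2\vartheta - N\}$ and, for $\rho \ge 1$, $$I(\rho) := \int_{\mathbb{R}^N} (1 + |x|)^{-\kappa} (1 + |x - \rho y_0|)^{-\vartheta} (1 + |x - \rho y|)^{-\vartheta}\, dx .$$ Then the integrand is integrable for every $\rho \ge 1$, and the following hold. (i) If $\max\{\kappa, 2\vartheta\} \ne N$, then there exists a constant $C_2 > 0$, depending only on $N, \kappa, \vartheta, |y_0|, |y|$, such that $I(\rho) \le C_2\, \rho^{-\tau}$ for all $\rho \ge 1$. (ii) In the borderline case $\max\{\kappa, 2\vartheta\} = N$, there exists a constant $C_2 > 0$, depending only on $N, \kappa, \vartheta, |y_0|, |y|$, such that $I(\rho) \le C_2\, \rho^{-\tau} (1 + \log \rho)$ for all $\rho \ge 1$. (iii) If $2\vartheta = N$, $\kappa < N$ and $|y_0 - y| \ge d$ for some $d > 0$, then there exists a constant $C_2 > 0$, depending only on $N, \kappa, \vartheta, |y_0|, |y|,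 d$, such that $I(\rho) \le C_2\, \rho^{-\tau}$ for all $\rho \ge 1$. (If $|y_0| \ne |y|$, one may take $d = \big||y_0| - |y|\big|$, so that $C_2$ depends only on $N, \kappa, \vartheta, |y_0|, |y|$.) -/

import Mathlib

/-- The function `x ↦ (1+|x|)^{-κ} (1+|x-ρ y₀|)^{-ϑ} (1+|x-ρ y|)^{-ϑ}` on `ℝ^N`. -/
noncomputable def tripleInteraction {N : ℕ} (κ ϑ ρ : ℝ) (y₀ y x : EuclideanSpace ℝ (Fin N)) : ℝ :=
  (1 + ‖x‖) ^ (-κ) * (1 + ‖x - ρ • y₀‖) ^ (-ϑ) * (1 + ‖x - ρ • y‖) ^ (-ϑ)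

/-- The decay exponent `τ = min{κ, 2ϑ, κ + 2ϑ - N}`. -/
noncomputable def interactionExponent (N : ℕ) (κ ϑ : ℝ) : ℝ :=
  min κ (min (2 * ϑ) (κ + 2 * ϑ - (N : ℝ)))

/-!
Where `|x| ≤ |x - z|`, the distance `|x - z|` is comparable to `max |x| |z|`; hence the product of
two power weights centered at `0` and `z` is dominated by the sum of a weight that is radial about
`0` and one that is radial about `z`. Polar coordinates turn the integrals of these into integrals
of powers, and a logarithm appears only when one of the exponents is the dimension.

The same bound, applied to the two weights of exponent `ϑ`, replaces them by a sum of single weights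
of exponent `2 * ϑ - ε`, at the gain of a factor `(1 + |z₀ - z|) ^ (-ε)`, for any `0 ≤ ε ≤ ϑ`. With
`ε = 0` this reduces three centers to two. When `2 * ϑ` is the dimension and the centers separate
linearly in `ρ`, a small `ε > 0` moves the exponent below the critical value, where no logarithm
occurs, and the factor gained restores the lost decay `ρ ^ (-ε)`.
-/

open MeasureTheory Module Set Metric

section PowerIntegrals

variable {q σ A : ℝ}

theorem integral_one_rpow_sub_one (hq : q ≠ 0) (hA : 0 < A) :
    ∫ s in (1 : ℝ)..A, s ^ (q - 1) = (A ^ q - 1) / q := by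
  rw [integral_rpow (Or.inr ⟨by simpa [sub_eq_iff_eq_add] using hq, notMem_uIcc_of_lt one_pos hA⟩),
    sub_add_cancel, Real.one_rpow]

theorem intervalIntegrable_one_rpow (r : ℝ) (hA : 0 < A) :
    IntervalIntegrable (fun s : ℝ => s ^ r) volume 1 A :=
  intervalIntegral.intervalIntegrable_rpow (Or.inr (notMem_uIcc_of_lt one_pos hA))

theorem exists_integral_one_rpow_sub_one_le_rpow {p : ℝ} (hp : 0 ≤ p) (hqp : q ≤ p)
    (hpq : p ≠ 0 ∨ q ≠ 0) :
    ∃ C : ℝ, 0 < C ∧ ∀ A : ℝ, 1 ≤ A → ∫ s in (1 : ℝ)..A, s ^ (q - 1) ≤ C * A ^ p := by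
  obtain ⟨r, hr, hqr, hrp⟩ : ∃ r : ℝ, r ≠ 0 ∧ q ≤ r ∧ r ≤ p :=
    hpq.elim (fun h => ⟨p, h, hqp, le_rfl⟩) (fun h => ⟨q, h, le_rfl, hqp⟩)
  refine ⟨|r|⁻¹, by positivity, fun A hA => ?_⟩
  have hA₀ : 0 < A := by linarith
  calc ∫ s in (1 : ℝ)..A, s ^ (q - 1)
      ≤ ∫ s in (1 : ℝ)..A, s ^ (r - 1) :=
        intervalIntegral.integral_mono_on hA (intervalIntegrable_one_rpow _ hA₀)
          (intervalIntegrable_one_rpow _ hA₀) fun s hs =>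
            Real.rpow_le_rpow_of_exponent_le hs.1 (by linarith)
    _ = r⁻¹ * (A ^ r - 1) := by rw [integral_one_rpow_sub_one hr hA₀, div_eq_inv_mul]
    _ ≤ |r|⁻¹ * A ^ p := by
        rcases hr.lt_or_gt with hr | hr
        · rw [abs_of_neg hr, inv_neg, neg_mul_comm]
          refine mul_le_mul_of_nonpos_left ?_ (inv_nonpos.2 hr.le)
          linarith [Real.rpow_nonneg hA₀.le r, Real.one_le_rpow hA hp]
        · rw [abs_of_pos hr]
          gcongr
          linarith [Real.rpow_le_rpow_of_exponent_le hA hrp]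

theorem integral_one_rpow_sub_one_le_rpow_mul_log (hq : 0 ≤ q) (hA : 1 ≤ A) :
    ∫ s in (1 : ℝ)..A, s ^ (q - 1) ≤ A ^ q * Real.log A := by
  have hA₀ : 0 < A := by linarith
  have hinv : ∫ s in (1 : ℝ)..A, s ^ (-1 : ℝ) = Real.log A := by
    simp only [Real.rpow_neg_one, integral_inv_of_pos one_pos hA₀, div_one]
  rw [← hinv, ← intervalIntegral.integral_const_mul]
  refine intervalIntegral.integral_mono_on hA (intervalIntegrable_one_rpow _ hA₀)
    ((intervalIntegrable_one_rpow _ hA₀).const_mul _) fun s hs => ?_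
  have hs₀ : 0 < s := by linarith [hs.1]
  rw [sub_eq_add_neg, Real.rpow_add hs₀]
  gcongr
  exact hs.2

theorem eqOn_rpow_mul_max_rpow_Ioc :
    EqOn (fun s : ℝ => s ^ (q - 1) * max s A ^ (-σ)) (fun s => A ^ (-σ) * s ^ (q - 1))
      (Ioc 1 A) := fun s hs => by
  simp only [max_eq_right hs.2, mul_comm]

theorem eqOn_rpow_mul_max_rpow_Ioi (hA : 0 ≤ A) :
    EqOn (fun s : ℝ => s ^ (q - 1) * max s A ^ (-σ)) (fun s => s ^ (q - σ - 1)) (Ioi A) :=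
  fun s hs => by
    have hs₀ : 0 < s := hA.trans_lt hs
    have hmax : max s A = s := max_eq_left (mem_Ioi.1 hs).le
    simp only [hmax, ← Real.rpow_add hs₀]
    ring_nf

theorem integrableOn_Ioc_rpow_mul_max_rpow (hA : 1 ≤ A) :
    IntegrableOn (fun s : ℝ => s ^ (q - 1) * max s A ^ (-σ)) (Ioc 1 A) :=
  IntegrableOn.congr_fun (((intervalIntegrable_iff_integrableOn_Ioc_of_le hA).1
    (intervalIntegrable_one_rpow (q - 1) (by linarith))).const_mul _)
    eqOn_rpow_mul_max_rpow_Ioc.symm measurableSet_Ioc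

theorem integrableOn_Ioi_rpow_mul_max_rpow (hqσ : q < σ) (hA : 0 < A) :
    IntegrableOn (fun s : ℝ => s ^ (q - 1) * max s A ^ (-σ)) (Ioi A) :=
  (integrableOn_Ioi_rpow_of_lt (by linarith) hA).congr_fun (eqOn_rpow_mul_max_rpow_Ioi hA.le).symm
    measurableSet_Ioi

theorem integrableOn_Ioi_one_rpow_mul_max_rpow (hqσ : q < σ) (hA : 1 ≤ A) :
    IntegrableOn (fun s : ℝ => s ^ (q - 1) * max s A ^ (-σ)) (Ioi 1) := by
  rw [← Ioc_union_Ioi_eq_Ioi hA]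
  exact (integrableOn_Ioc_rpow_mul_max_rpow hA).union
    (integrableOn_Ioi_rpow_mul_max_rpow hqσ (by linarith))

theorem integral_Ioi_one_rpow_mul_max_rpow (hqσ : q < σ) (hA : 1 ≤ A) :
    ∫ s in Ioi (1 : ℝ), s ^ (q - 1) * max s A ^ (-σ) =
      A ^ (-σ) * (∫ s in (1 : ℝ)..A, s ^ (q - 1)) + A ^ (q - σ) / (σ - q) := by
  have hA₀ : 0 < A := by linarith
  rw [← Ioc_union_Ioi_eq_Ioi hA, setIntegral_union (Ioc_disjoint_Ioi le_rfl) measurableSet_Ioi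
    (integrableOn_Ioc_rpow_mul_max_rpow hA) (integrableOn_Ioi_rpow_mul_max_rpow hqσ hA₀),
    setIntegral_congr_fun measurableSet_Ioc eqOn_rpow_mul_max_rpow_Ioc,
    setIntegral_congr_fun measurableSet_Ioi (eqOn_rpow_mul_max_rpow_Ioi hA₀.le),
    integral_const_mul, ← intervalIntegral.integral_of_le hA,
    integral_Ioi_rpow_of_lt (by linarith) hA₀, sub_add_cancel, ← neg_sub σ, div_neg, neg_div,
    neg_neg]

end PowerIntegrals

section RadialWeights

theorem measureReal_ball_pos {X : Type*} [PseudoMetricSpace X] [ProperSpace X] [MeasurableSpace X]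
    (μ : Measure X) [μ.IsOpenPosMeasure] [IsFiniteMeasureOnCompacts μ] (x : X) {r : ℝ}
    (hr : 0 < r) : 0 < μ.real (ball x r) :=
  ENNReal.toReal_pos (measure_ball_pos μ x hr).ne' measure_ball_lt_top.ne

variable {E : Type*} [NormedAddCommGroup E]

/-- The radial weight which, up to constants, decays like `(1 + |x|) ^ (-κ)` in the ball of radius
`A - 1`, with the prefactor `A ^ (-σ)`, and like `(1 + |x|) ^ (-(κ + σ))` outside it. It is the
contribution of one of two centers at distance `A - 1` to the product of their power weights. -/
noncomputable def truncatedWeight (κ σ A : ℝ) (x : E) : ℝ :=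
  (1 + ‖x‖) ^ (-κ) * max (1 + ‖x‖) A ^ (-σ)

theorem truncatedWeight_nonneg (κ σ A : ℝ) (x : E) : 0 ≤ truncatedWeight κ σ A x := by
  unfold truncatedWeight
  positivity

theorem max_rpow_neg_le_mul {u v ε σ : ℝ} (hu : 0 < u) (hv : 0 < v) (hε : 0 ≤ ε) (hεσ : ε ≤ σ) :
    max u v ^ (-σ) ≤ v ^ (-ε) * u ^ (-(σ - ε)) := by
  have hm : 0 < max u v := lt_max_of_lt_left hu
  calc max u v ^ (-σ) = max u v ^ (-ε) * max u v ^ (-(σ - ε)) := by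
        rw [← Real.rpow_add hm]; ring_nf
    _ ≤ v ^ (-ε) * u ^ (-(σ - ε)) := by
        gcongr ?_ * ?_
        · exact Real.rpow_le_rpow_of_nonpos hv (le_max_right u v) (by linarith)
        · exact Real.rpow_le_rpow_of_nonpos hu (le_max_left u v) (by linarith)

theorem truncatedWeight_le {κ σ ε A : ℝ} (hA : 0 < A) (hε : 0 ≤ ε) (hεσ : ε ≤ σ) (x : E) :
    truncatedWeight κ σ A x ≤ A ^ (-ε) * (1 + ‖x‖) ^ (-(κ + σ - ε)) := by
  have hx : 0 < 1 + ‖x‖ := by positivity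
  calc truncatedWeight κ σ A x
      ≤ (1 + ‖x‖) ^ (-κ) * (A ^ (-ε) * (1 + ‖x‖) ^ (-(σ - ε))) :=
        mul_le_mul_of_nonneg_left (max_rpow_neg_le_mul hx hA hε hεσ) (by positivity)
    _ = A ^ (-ε) * (1 + ‖x‖) ^ (-(κ + σ - ε)) := by
        rw [mul_left_comm, ← Real.rpow_add hx]; ring_nf

variable [NormedSpace ℝ E] [FiniteDimensional ℝ E] [MeasurableSpace E] [BorelSpace E]
  (μ : Measure E) [μ.IsAddHaarMeasure]

theorem integrable_truncatedWeight {κ σ A : ℝ} (hσ : 0 ≤ σ) (hκσ : (finrank ℝ E : ℝ) < κ + σ)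
    (hA : 0 < A) : Integrable (truncatedWeight κ σ A : E → ℝ) μ := by
  refine (integrable_one_add_norm hκσ).mono'
    (Measurable.aestronglyMeasurable (by unfold truncatedWeight; fun_prop)) (.of_forall fun x => ?_)
  rw [Real.norm_of_nonneg (truncatedWeight_nonneg κ σ A x)]
  simpa using truncatedWeight_le (κ := κ) hA le_rfl hσ x

variable [Nontrivial E]

theorem integral_fun_one_add_norm_le {f : ℝ → ℝ} (hf : ∀ s, 1 < s → 0 ≤ f s)
    (hint : IntegrableOn (fun s => s ^ ((finrank ℝ E : ℝ) - 1) * f s) (Ioi 1)) :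
    ∫ x, f (1 + ‖x‖) ∂μ ≤ finrank ℝ E * μ.real (ball 0 1) *
      ∫ s in Ioi (1 : ℝ), s ^ ((finrank ℝ E : ℝ) - 1) * f s := by
  have hshift := measurePreserving_add_left volume (1 : ℝ)
  have hpre : (fun t : ℝ => 1 + t) ⁻¹' Ioi 1 = Ioi 0 := by simp
  have hint' := (hshift.integrableOn_comp_preimage (measurableEmbedding_addLeft 1)).2 hint
  have hint₁ := hshift.setIntegral_preimage_emb (measurableEmbedding_addLeft 1)
    (fun s => s ^ ((finrank ℝ E : ℝ) - 1) * f s) (Ioi 1)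
  rw [hpre] at hint' hint₁
  rw [integral_fun_norm_addHaar μ (fun t => f (1 + t)), nsmul_eq_mul, smul_eq_mul, ← mul_assoc,
    ← hint₁]
  refine mul_le_mul_of_nonneg_left (integral_mono_of_nonneg ?_ hint' ?_) (by positivity)
  · filter_upwards [ae_restrict_mem measurableSet_Ioi] with t (ht : 0 < t)
    exact mul_nonneg (by positivity) (hf _ (by linarith))
  · filter_upwards [ae_restrict_mem measurableSet_Ioi] with t (ht : 0 < t)
    refine mul_le_mul_of_nonneg_right ?_ (hf _ (by linarith))
    rw [← Real.rpow_natCast, Nat.cast_pred finrank_pos]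
    have hd : (1 : ℝ) ≤ finrank ℝ E := mod_cast finrank_pos (R := ℝ) (M := E)
    exact Real.rpow_le_rpow ht.le (by linarith) (by linarith)

theorem integral_truncatedWeight_le {κ σ A : ℝ} (hκσ : (finrank ℝ E : ℝ) < κ + σ) (hA : 1 ≤ A) :
    ∫ x, truncatedWeight κ σ A x ∂μ ≤ finrank ℝ E * μ.real (ball 0 1) *
      (A ^ (-σ) * (∫ s in (1 : ℝ)..A, s ^ (finrank ℝ E - κ - 1)) +
        A ^ (finrank ℝ E - κ - σ) / (κ + σ - finrank ℝ E)) := by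
  have hqσ : finrank ℝ E - κ < σ := by linarith
  have hcongr : EqOn
      (fun s : ℝ => s ^ ((finrank ℝ E : ℝ) - 1) * (s ^ (-κ) * max s A ^ (-σ)))
      (fun s => s ^ (finrank ℝ E - κ - 1) * max s A ^ (-σ)) (Ioi 1) := fun s (hs : 1 < s) => by
    simp only [← mul_assoc, ← Real.rpow_add (one_pos.trans hs)]
    ring_nf
  have hpolar := integral_fun_one_add_norm_le μ (f := fun s => s ^ (-κ) * max s A ^ (-σ))
    (fun s hs => by positivity)
    ((integrableOn_Ioi_one_rpow_mul_max_rpow hqσ hA).congr_fun hcongr.symm measurableSet_Ioi)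
  rwa [setIntegral_congr_fun measurableSet_Ioi hcongr, integral_Ioi_one_rpow_mul_max_rpow hqσ hA,
    ← sub_add, sub_add_eq_add_sub, add_comm σ] at hpolar

theorem exists_integral_truncatedWeight_le_rpow {κ σ τ : ℝ} (hκσ : (finrank ℝ E : ℝ) < κ + σ)
    (hτσ : τ ≤ σ) (hτ : τ ≤ κ + σ - finrank ℝ E) (hne : τ ≠ σ ∨ κ ≠ finrank ℝ E) :
    ∃ C : ℝ, 0 < C ∧ ∀ A : ℝ, 1 ≤ A → ∫ x, truncatedWeight κ σ A x ∂μ ≤ C * A ^ (-τ) := by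
  obtain ⟨C, hC, hball⟩ := exists_integral_one_rpow_sub_one_le_rpow
    (q := finrank ℝ E - κ) (p := σ - τ) (by linarith) (by linarith)
    (hne.imp (fun h => sub_ne_zero.2 h.symm) (fun h => sub_ne_zero.2 h.symm))
  have hd : 0 < finrank ℝ E := finrank_pos
  have hball₁ : 0 < μ.real (ball (0 : E) 1) := measureReal_ball_pos μ 0 one_pos
  have : 0 < κ + σ - finrank ℝ E := by linarith
  refine ⟨finrank ℝ E * μ.real (ball 0 1) * (C + (κ + σ - finrank ℝ E)⁻¹), by positivity,
    fun A hA => (integral_truncatedWeight_le μ hκσ hA).trans ?_⟩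
  have hA₀ : 0 < A := by linarith
  rw [mul_assoc (_ * _), add_mul]
  refine mul_le_mul_of_nonneg_left (add_le_add ?_ ?_) (by positivity)
  · calc A ^ (-σ) * (∫ s in (1 : ℝ)..A, s ^ (finrank ℝ E - κ - 1))
        ≤ A ^ (-σ) * (C * A ^ (σ - τ)) := by gcongr; exact hball A hA
      _ = C * A ^ (-τ) := by rw [mul_left_comm, ← Real.rpow_add hA₀]; ring_nf
  · rw [div_eq_inv_mul]
    gcongr
    linarith

theorem exists_integral_truncatedWeight_le_rpow_mul_log {κ σ : ℝ}
    (hκσ : (finrank ℝ E : ℝ) < κ + σ) (hκ : κ ≤ finrank ℝ E) :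
    ∃ C : ℝ, 0 < C ∧ ∀ A : ℝ, 1 ≤ A → ∫ x, truncatedWeight κ σ A x ∂μ ≤
      C * (A ^ (-(κ + σ - finrank ℝ E)) * (1 + Real.log A)) := by
  have hd : 0 < finrank ℝ E := finrank_pos
  have hball₁ : 0 < μ.real (ball (0 : E) 1) := measureReal_ball_pos μ 0 one_pos
  have : 0 < κ + σ - finrank ℝ E := by linarith
  refine ⟨finrank ℝ E * μ.real (ball 0 1) * (1 + (κ + σ - finrank ℝ E)⁻¹), by positivity,
    fun A hA => (integral_truncatedWeight_le μ hκσ hA).trans ?_⟩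
  have hA₀ : 0 < A := by linarith
  have hlog : 0 ≤ Real.log A := Real.log_nonneg hA
  rw [mul_assoc (_ * _), add_mul, one_mul]
  refine mul_le_mul_of_nonneg_left (add_le_add ?_ ?_) (by positivity)
  · calc A ^ (-σ) * (∫ s in (1 : ℝ)..A, s ^ (finrank ℝ E - κ - 1))
        ≤ A ^ (-σ) * (A ^ (finrank ℝ E - κ) * Real.log A) := by
          gcongr
          exact integral_one_rpow_sub_one_le_rpow_mul_log (by linarith) hA
      _ = A ^ (-(κ + σ - finrank ℝ E)) * Real.log A := by
          rw [← mul_assoc, ← Real.rpow_add hA₀]; ring_nf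
      _ ≤ A ^ (-(κ + σ - finrank ℝ E)) * (1 + Real.log A) := by gcongr; linarith
  · rw [div_eq_inv_mul, show finrank ℝ E - κ - σ = -(κ + σ - finrank ℝ E) by ring]
    gcongr
    exact le_mul_of_one_le_right (by positivity) (by linarith)

end RadialWeights

section TwoCenters

variable {E : Type*} [NormedAddCommGroup E]

/-- The product of the power weights with exponents `κ` and `σ` centered at `0` and `z`. -/
noncomputable def twoCenterWeight (κ σ : ℝ) (z x : E) : ℝ :=
  (1 + ‖x‖) ^ (-κ) * (1 + ‖x - z‖) ^ (-σ)

theorem twoCenterWeight_nonneg (κ σ : ℝ) (z x : E) : 0 ≤ twoCenterWeight κ σ z x := by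
  unfold twoCenterWeight
  positivity

theorem rpow_neg_le_two_rpow_mul_max_rpow_neg {u v D σ : ℝ} (hσ : 0 ≤ σ) (hu : 0 < u)
    (huv : u ≤ v) (hD : D ≤ u + v) : v ^ (-σ) ≤ 2 ^ σ * max u D ^ (-σ) := by
  have hm : 0 < max u D := lt_max_of_lt_left hu
  calc v ^ (-σ) ≤ (max u D / 2) ^ (-σ) :=
        Real.rpow_le_rpow_of_nonpos (by positivity)
          ((div_le_iff₀' two_pos).2 (max_le (by linarith) (by linarith))) (by linarith)
    _ = 2 ^ σ * max u D ^ (-σ) := by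
        rw [Real.div_rpow hm.le two_pos.le, Real.rpow_neg two_pos.le, div_inv_eq_mul, mul_comm]

theorem twoCenterWeight_le_add_truncatedWeight {κ σ : ℝ} (hκ : 0 ≤ κ) (hσ : 0 ≤ σ) (z x : E) :
    twoCenterWeight κ σ z x ≤ 2 ^ σ * truncatedWeight κ σ (1 + ‖z‖) x +
      2 ^ κ * truncatedWeight σ κ (1 + ‖z‖) (x - z) := by
  have htri : ‖z‖ ≤ ‖x‖ + ‖x - z‖ := by simpa using norm_sub_le x (x - z)
  unfold twoCenterWeight truncatedWeight
  rcases le_total ‖x‖ ‖x - z‖ with h | h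
  · refine le_add_of_le_of_nonneg ?_ (by positivity)
    rw [mul_left_comm]
    gcongr
    exact rpow_neg_le_two_rpow_mul_max_rpow_neg hσ (by positivity) (by linarith) (by linarith)
  · refine le_add_of_nonneg_of_le (by positivity) ?_
    rw [mul_left_comm, mul_comm]
    gcongr
    exact rpow_neg_le_two_rpow_mul_max_rpow_neg hκ (by positivity) (by linarith) (by linarith)

variable [NormedSpace ℝ E] [FiniteDimensional ℝ E] [MeasurableSpace E] [BorelSpace E]
  (μ : Measure E) [μ.IsAddHaarMeasure]

theorem integrable_twoCenterWeight {κ σ : ℝ} (hκ : 0 ≤ κ) (hσ : 0 ≤ σ)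
    (hκσ : (finrank ℝ E : ℝ) < κ + σ) (z : E) : Integrable (twoCenterWeight κ σ z) μ := by
  have hz : 0 < 1 + ‖z‖ := by positivity
  have hmajorant := ((integrable_truncatedWeight μ hσ hκσ hz).const_mul (2 ^ σ)).add
    (((integrable_truncatedWeight μ hκ (add_comm κ σ ▸ hκσ) hz).comp_sub_right z).const_mul (2 ^ κ))
  refine hmajorant.mono' (Measurable.aestronglyMeasurable (by unfold twoCenterWeight; fun_prop))
    (.of_forall fun x => ?_)
  rw [Real.norm_of_nonneg (twoCenterWeight_nonneg κ σ z x)]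
  exact twoCenterWeight_le_add_truncatedWeight hκ hσ z x

theorem integral_twoCenterWeight_le_add_truncatedWeight {κ σ : ℝ} (hκ : 0 ≤ κ) (hσ : 0 ≤ σ)
    (hκσ : (finrank ℝ E : ℝ) < κ + σ) (z : E) :
    ∫ x, twoCenterWeight κ σ z x ∂μ ≤
      2 ^ σ * (∫ x : E, truncatedWeight κ σ (1 + ‖z‖) x ∂μ) +
        2 ^ κ * ∫ x : E, truncatedWeight σ κ (1 + ‖z‖) x ∂μ := by
  have hz : 0 < 1 + ‖z‖ := by positivity
  have h₀ := (integrable_truncatedWeight μ hσ hκσ hz).const_mul (2 ^ σ)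
  have h₁ :=
    ((integrable_truncatedWeight μ hκ (add_comm κ σ ▸ hκσ) hz).comp_sub_right z).const_mul (2 ^ κ)
  refine (integral_mono (integrable_twoCenterWeight μ hκ hσ hκσ z) (h₀.add h₁)
    (twoCenterWeight_le_add_truncatedWeight hκ hσ z)).trans_eq ?_
  rw [integral_add' h₀ h₁, integral_const_mul, integral_const_mul,
    integral_sub_right_eq_self (truncatedWeight σ κ (1 + ‖z‖))]

variable [Nontrivial E]

theorem exists_integral_twoCenterWeight_le_rpow {κ σ τ : ℝ} (hκ : 0 ≤ κ) (hσ : 0 ≤ σ)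
    (hκσ : (finrank ℝ E : ℝ) < κ + σ) (hmax : max κ σ ≠ finrank ℝ E)
    (hτκ : τ ≤ κ) (hτσ : τ ≤ σ) (hτ : τ ≤ κ + σ - finrank ℝ E) :
    ∃ C : ℝ, 0 < C ∧ ∀ z : E, ∫ x, twoCenterWeight κ σ z x ∂μ ≤ C * (1 + ‖z‖) ^ (-τ) := by
  have hne₀ : τ ≠ σ ∨ κ ≠ finrank ℝ E := by
    by_contra! h
    exact hmax (by rw [max_eq_left (h.1 ▸ hτκ), h.2])
  have hne₁ : τ ≠ κ ∨ σ ≠ finrank ℝ E := by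
    by_contra! h
    exact hmax (by rw [max_eq_right (h.1 ▸ hτσ), h.2])
  obtain ⟨C₀, hC₀, h₀⟩ := exists_integral_truncatedWeight_le_rpow μ hκσ hτσ hτ hne₀
  obtain ⟨C₁, hC₁, h₁⟩ := exists_integral_truncatedWeight_le_rpow μ (κ := σ) (σ := κ)
    (by linarith) hτκ (by linarith) hne₁
  refine ⟨2 ^ σ * C₀ + 2 ^ κ * C₁, by positivity, fun z => ?_⟩
  have hz : 1 ≤ 1 + ‖z‖ := by simp
  refine (integral_twoCenterWeight_le_add_truncatedWeight μ hκ hσ hκσ z).trans ?_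
  rw [add_mul, mul_assoc, mul_assoc]
  gcongr
  · exact h₀ _ hz
  · exact h₁ _ hz

theorem exists_integral_twoCenterWeight_le_rpow_mul_log {κ σ : ℝ} (hκ : 0 ≤ κ) (hσ : 0 ≤ σ)
    (hκσ : (finrank ℝ E : ℝ) < κ + σ) (hκd : κ ≤ finrank ℝ E) (hσd : σ ≤ finrank ℝ E) :
    ∃ C : ℝ, 0 < C ∧ ∀ z : E, ∫ x, twoCenterWeight κ σ z x ∂μ ≤
      C * ((1 + ‖z‖) ^ (-(κ + σ - finrank ℝ E)) * (1 + Real.log (1 + ‖z‖))) := by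
  obtain ⟨C₀, hC₀, h₀⟩ := exists_integral_truncatedWeight_le_rpow_mul_log μ hκσ hκd
  obtain ⟨C₁, hC₁, h₁⟩ := exists_integral_truncatedWeight_le_rpow_mul_log μ
    (by rwa [add_comm]) hσd
  rw [add_comm σ] at h₁
  refine ⟨2 ^ σ * C₀ + 2 ^ κ * C₁, by positivity, fun z => ?_⟩
  have hz : 1 ≤ 1 + ‖z‖ := by simp
  refine (integral_twoCenterWeight_le_add_truncatedWeight μ hκ hσ hκσ z).trans ?_
  rw [add_mul, mul_assoc, mul_assoc]
  gcongr
  · exact h₀ _ hz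
  · exact h₁ _ hz

end TwoCenters

section ThreeCenters

variable {E : Type*} [NormedAddCommGroup E]

/-- The product of the power weight with exponent `κ` centered at `0` and the two power weights with
exponent `ϑ` centered at `z₀` and `z`; `tripleInteraction κ ϑ ρ y₀ y` is the case `z₀ = ρ • y₀`,
`z = ρ • y`. -/
noncomputable def threeCenterWeight (κ ϑ : ℝ) (z₀ z x : E) : ℝ :=
  (1 + ‖x‖) ^ (-κ) * (1 + ‖x - z₀‖) ^ (-ϑ) * (1 + ‖x - z‖) ^ (-ϑ)

theorem threeCenterWeight_nonneg (κ ϑ : ℝ) (z₀ z x : E) : 0 ≤ threeCenterWeight κ ϑ z₀ z x := by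
  unfold threeCenterWeight
  positivity

theorem twoCenterWeight_self_le {ϑ ε : ℝ} (hε : 0 ≤ ε) (hεϑ : ε ≤ ϑ) (z x : E) :
    twoCenterWeight ϑ ϑ z x ≤ 2 ^ ϑ * (1 + ‖z‖) ^ (-ε) *
      ((1 + ‖x‖) ^ (-(2 * ϑ - ε)) + (1 + ‖x - z‖) ^ (-(2 * ϑ - ε))) := by
  have hϑ : 0 ≤ ϑ := hε.trans hεϑ
  have hz : 0 < 1 + ‖z‖ := by positivity
  calc twoCenterWeight ϑ ϑ z x
      ≤ 2 ^ ϑ * truncatedWeight ϑ ϑ (1 + ‖z‖) x + 2 ^ ϑ * truncatedWeight ϑ ϑ (1 + ‖z‖) (x - z) :=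
        twoCenterWeight_le_add_truncatedWeight hϑ hϑ z x
    _ ≤ 2 ^ ϑ * ((1 + ‖z‖) ^ (-ε) * (1 + ‖x‖) ^ (-(ϑ + ϑ - ε))) +
          2 ^ ϑ * ((1 + ‖z‖) ^ (-ε) * (1 + ‖x - z‖) ^ (-(ϑ + ϑ - ε))) := by
        gcongr <;> exact truncatedWeight_le hz hε hεϑ _
    _ = 2 ^ ϑ * (1 + ‖z‖) ^ (-ε) *
          ((1 + ‖x‖) ^ (-(2 * ϑ - ε)) + (1 + ‖x - z‖) ^ (-(2 * ϑ - ε))) := by ring_nf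

theorem threeCenterWeight_le_add_twoCenterWeight {κ ϑ ε : ℝ} (hε : 0 ≤ ε) (hεϑ : ε ≤ ϑ)
    (z₀ z x : E) :
    threeCenterWeight κ ϑ z₀ z x ≤ 2 ^ ϑ * (1 + ‖z₀ - z‖) ^ (-ε) *
      (twoCenterWeight κ (2 * ϑ - ε) z₀ x + twoCenterWeight κ (2 * ϑ - ε) z x) := by
  have hpair := twoCenterWeight_self_le hε hεϑ (z - z₀) (x - z₀)
  rw [twoCenterWeight, sub_sub_sub_cancel_right, norm_sub_rev z] at hpair
  calc threeCenterWeight κ ϑ z₀ z x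
      = (1 + ‖x‖) ^ (-κ) * ((1 + ‖x - z₀‖) ^ (-ϑ) * (1 + ‖x - z‖) ^ (-ϑ)) := mul_assoc _ _ _
    _ ≤ (1 + ‖x‖) ^ (-κ) * (2 ^ ϑ * (1 + ‖z₀ - z‖) ^ (-ε) *
          ((1 + ‖x - z₀‖) ^ (-(2 * ϑ - ε)) + (1 + ‖x - z‖) ^ (-(2 * ϑ - ε)))) :=
        mul_le_mul_of_nonneg_left hpair (by positivity)
    _ = 2 ^ ϑ * (1 + ‖z₀ - z‖) ^ (-ε) *
          (twoCenterWeight κ (2 * ϑ - ε) z₀ x + twoCenterWeight κ (2 * ϑ - ε) z x) := by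
        unfold twoCenterWeight
        ring

variable [NormedSpace ℝ E] [FiniteDimensional ℝ E] [MeasurableSpace E] [BorelSpace E]
  (μ : Measure E) [μ.IsAddHaarMeasure]

theorem integrable_threeCenterWeight {κ ϑ : ℝ} (hκ : 0 ≤ κ) (hϑ : 0 ≤ ϑ)
    (hκϑ : (finrank ℝ E : ℝ) < κ + 2 * ϑ) (z₀ z : E) :
    Integrable (threeCenterWeight κ ϑ z₀ z) μ := by
  have hpair := integrable_twoCenterWeight μ hκ (by positivity : 0 ≤ 2 * ϑ) hκϑ
  refine (((hpair z₀).add (hpair z)).const_mul (2 ^ ϑ)).mono'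
    (Measurable.aestronglyMeasurable (by unfold threeCenterWeight; fun_prop))
    (.of_forall fun x => ?_)
  rw [Real.norm_of_nonneg (threeCenterWeight_nonneg κ ϑ z₀ z x)]
  simpa using threeCenterWeight_le_add_twoCenterWeight (κ := κ) le_rfl hϑ z₀ z x

theorem integral_threeCenterWeight_le_add_twoCenterWeight {κ ϑ ε : ℝ} (hκ : 0 ≤ κ) (hε : 0 ≤ ε)
    (hεϑ : ε ≤ ϑ) (hκϑ : (finrank ℝ E : ℝ) < κ + (2 * ϑ - ε)) (z₀ z : E) :
    ∫ x, threeCenterWeight κ ϑ z₀ z x ∂μ ≤ 2 ^ ϑ * (1 + ‖z₀ - z‖) ^ (-ε) *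
      ((∫ x, twoCenterWeight κ (2 * ϑ - ε) z₀ x ∂μ) +
        ∫ x, twoCenterWeight κ (2 * ϑ - ε) z x ∂μ) := by
  have hpair := integrable_twoCenterWeight μ hκ (by linarith : 0 ≤ 2 * ϑ - ε) hκϑ
  refine (integral_mono
    (integrable_threeCenterWeight μ hκ (hε.trans hεϑ) (by linarith) z₀ z)
    (((hpair z₀).add (hpair z)).const_mul _)
    (threeCenterWeight_le_add_twoCenterWeight hε hεϑ z₀ z)).trans_eq ?_
  rw [integral_const_mul, integral_add' (hpair z₀) (hpair z)]

theorem integral_threeCenterWeight_le_two_rpow_mul {κ ϑ : ℝ} (hκ : 0 ≤ κ) (hϑ : 0 ≤ ϑ)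
    (hκϑ : (finrank ℝ E : ℝ) < κ + 2 * ϑ) (z₀ z : E) :
    ∫ x, threeCenterWeight κ ϑ z₀ z x ∂μ ≤ 2 ^ ϑ *
      ((∫ x, twoCenterWeight κ (2 * ϑ) z₀ x ∂μ) + ∫ x, twoCenterWeight κ (2 * ϑ) z x ∂μ) := by
  simpa using
    integral_threeCenterWeight_le_add_twoCenterWeight μ hκ le_rfl hϑ (by simpa using hκϑ) z₀ z

end ThreeCenters

section Dilation

theorem rpow_neg_le_mul_rpow_neg {a ρ s τ : ℝ} (ha : 0 < a) (hρ : 0 < ρ) (hs : a * ρ ≤ s)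
    (hτ : 0 ≤ τ) : s ^ (-τ) ≤ a ^ (-τ) * ρ ^ (-τ) := by
  rw [← Real.mul_rpow ha.le hρ.le]
  exact Real.rpow_le_rpow_of_nonpos (by positivity) hs (by linarith)

theorem rpow_neg_mul_one_add_log_le {a ρ s τ : ℝ} (ha : 0 < a) (hρ : 1 ≤ ρ) (hs : a * ρ ≤ s)
    (hτ : 0 < τ) :
    s ^ (-τ) * (1 + Real.log s) ≤ (a ^ (-τ) + τ⁻¹) * (ρ ^ (-τ) * (1 + Real.log ρ)) := by
  have hρ₀ : 0 < ρ := by linarith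
  have hs₀ : 0 < s := (mul_pos ha hρ₀).trans_le hs
  have hlogρ : 0 ≤ Real.log ρ := Real.log_nonneg hρ
  have hlog : Real.log s ≤ Real.log ρ + s ^ τ * (ρ ^ (-τ) * τ⁻¹) := by
    have h := Real.log_le_rpow_div (div_nonneg hs₀.le hρ₀.le) hτ
    rw [Real.log_div hs₀.ne' hρ₀.ne', Real.div_rpow hs₀.le hρ₀.le, div_div, div_eq_mul_inv,
      mul_inv, ← Real.rpow_neg hρ₀.le] at h
    linarith
  calc s ^ (-τ) * (1 + Real.log s)
      ≤ s ^ (-τ) * (1 + (Real.log ρ + s ^ τ * (ρ ^ (-τ) * τ⁻¹))) := by gcongr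
    _ = s ^ (-τ) * (1 + Real.log ρ) + τ⁻¹ * (ρ ^ (-τ) * 1) := by
        rw [Real.rpow_neg hs₀.le]
        field_simp
        ring
    _ ≤ a ^ (-τ) * ρ ^ (-τ) * (1 + Real.log ρ) + τ⁻¹ * (ρ ^ (-τ) * (1 + Real.log ρ)) := by
        gcongr
        · exact rpow_neg_le_mul_rpow_neg ha hρ₀ hs hτ.le
        · linarith
    _ = (a ^ (-τ) + τ⁻¹) * (ρ ^ (-τ) * (1 + Real.log ρ)) := by ring

variable {E : Type*} [NormedAddCommGroup E] [NormedSpace ℝ E]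

theorem mul_le_one_add_norm_smul {a ρ : ℝ} (hρ : 0 ≤ ρ) {y : E} (hy : a ≤ ‖y‖) :
    a * ρ ≤ 1 + ‖ρ • y‖ := by
  rw [norm_smul, Real.norm_of_nonneg hρ, mul_comm]
  linarith [mul_le_mul_of_nonneg_left hy hρ]

variable [FiniteDimensional ℝ E] [Nontrivial E] [MeasurableSpace E] [BorelSpace E]
  (μ : Measure E) [μ.IsAddHaarMeasure]

theorem exists_integral_twoCenterWeight_smul_le_rpow {κ σ τ a : ℝ} (hκ : 0 ≤ κ) (hσ : 0 ≤ σ)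
    (hκσ : (finrank ℝ E : ℝ) < κ + σ) (hmax : max κ σ ≠ finrank ℝ E) (hτ₀ : 0 ≤ τ)
    (hτκ : τ ≤ κ) (hτσ : τ ≤ σ) (hτ : τ ≤ κ + σ - finrank ℝ E) (ha : 0 < a) :
    ∃ C : ℝ, 0 < C ∧ ∀ y : E, a ≤ ‖y‖ → ∀ ρ : ℝ, 1 ≤ ρ →
      ∫ x, twoCenterWeight κ σ (ρ • y) x ∂μ ≤ C * ρ ^ (-τ) := by
  obtain ⟨C, hC, h⟩ := exists_integral_twoCenterWeight_le_rpow μ hκ hσ hκσ hmax hτκ hτσ hτ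
  refine ⟨C * a ^ (-τ), by positivity, fun y hy ρ hρ => (h (ρ • y)).trans ?_⟩
  have hρ₀ : 0 < ρ := by linarith
  rw [mul_assoc]
  gcongr
  exact rpow_neg_le_mul_rpow_neg ha hρ₀ (mul_le_one_add_norm_smul hρ₀.le hy) hτ₀

theorem exists_integral_twoCenterWeight_smul_le_rpow_mul_log {κ σ a : ℝ} (hκ : 0 ≤ κ)
    (hσ : 0 ≤ σ) (hκσ : (finrank ℝ E : ℝ) < κ + σ) (hκd : κ ≤ finrank ℝ E)
    (hσd : σ ≤ finrank ℝ E) (ha : 0 < a) :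
    ∃ C : ℝ, 0 < C ∧ ∀ y : E, a ≤ ‖y‖ → ∀ ρ : ℝ, 1 ≤ ρ →
      ∫ x, twoCenterWeight κ σ (ρ • y) x ∂μ ≤
        C * (ρ ^ (-(κ + σ - finrank ℝ E)) * (1 + Real.log ρ)) := by
  obtain ⟨C, hC, h⟩ := exists_integral_twoCenterWeight_le_rpow_mul_log μ hκ hσ hκσ hκd hσd
  have hτ : 0 < κ + σ - finrank ℝ E := by linarith
  refine ⟨C * (a ^ (-(κ + σ - finrank ℝ E)) + (κ + σ - finrank ℝ E)⁻¹), by positivity,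
    fun y hy ρ hρ => (h (ρ • y)).trans ?_⟩
  rw [mul_assoc]
  exact mul_le_mul_of_nonneg_left
    (rpow_neg_mul_one_add_log_le ha hρ (mul_le_one_add_norm_smul (by linarith) hy) hτ) hC.le

theorem exists_integral_threeCenterWeight_smul_le_rpow {κ ϑ τ a : ℝ} (hκ : 0 ≤ κ) (hϑ : 0 ≤ ϑ)
    (hκϑ : (finrank ℝ E : ℝ) < κ + 2 * ϑ) (hmax : max κ (2 * ϑ) ≠ finrank ℝ E) (hτ₀ : 0 ≤ τ)
    (hτκ : τ ≤ κ) (hτϑ : τ ≤ 2 * ϑ) (hτ : τ ≤ κ + 2 * ϑ - finrank ℝ E) (ha : 0 < a) :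
    ∃ C : ℝ, 0 < C ∧ ∀ y₀ y : E, a ≤ ‖y₀‖ → a ≤ ‖y‖ → ∀ ρ : ℝ, 1 ≤ ρ →
      ∫ x, threeCenterWeight κ ϑ (ρ • y₀) (ρ • y) x ∂μ ≤ C * ρ ^ (-τ) := by
  obtain ⟨C, hC, h⟩ := exists_integral_twoCenterWeight_smul_le_rpow μ hκ (by positivity) hκϑ hmax
    hτ₀ hτκ hτϑ hτ ha
  refine ⟨2 ^ ϑ * (C + C), by positivity, fun y₀ y hy₀ hy ρ hρ =>
    (integral_threeCenterWeight_le_two_rpow_mul μ hκ hϑ hκϑ _ _).trans ?_⟩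
  rw [mul_assoc, add_mul]
  gcongr
  · exact h y₀ hy₀ ρ hρ
  · exact h y hy ρ hρ

theorem exists_integral_threeCenterWeight_smul_le_rpow_mul_log {κ ϑ a : ℝ} (hκ : 0 ≤ κ)
    (hϑ : 0 ≤ ϑ) (hκϑ : (finrank ℝ E : ℝ) < κ + 2 * ϑ) (hκd : κ ≤ finrank ℝ E)
    (hϑd : 2 * ϑ ≤ finrank ℝ E) (ha : 0 < a) :
    ∃ C : ℝ, 0 < C ∧ ∀ y₀ y : E, a ≤ ‖y₀‖ → a ≤ ‖y‖ → ∀ ρ : ℝ, 1 ≤ ρ →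
      ∫ x, threeCenterWeight κ ϑ (ρ • y₀) (ρ • y) x ∂μ ≤
        C * ρ ^ (-(κ + 2 * ϑ - finrank ℝ E)) * (1 + Real.log ρ) := by
  obtain ⟨C, hC, h⟩ := exists_integral_twoCenterWeight_smul_le_rpow_mul_log μ hκ (by positivity)
    hκϑ hκd hϑd ha
  refine ⟨2 ^ ϑ * (C + C), by positivity, fun y₀ y hy₀ hy ρ hρ =>
    (integral_threeCenterWeight_le_two_rpow_mul μ hκ hϑ hκϑ _ _).trans ?_⟩
  rw [mul_assoc, mul_assoc, add_mul]
  exact mul_le_mul_of_nonneg_left (add_le_add (h y₀ hy₀ ρ hρ) (h y hy ρ hρ)) (by positivity)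

theorem exists_integral_threeCenterWeight_smul_le_rpow_of_le_norm_sub {κ ϑ a δ : ℝ} (hκ : 0 < κ)
    (hϑd : 2 * ϑ = finrank ℝ E) (hκd : κ < finrank ℝ E) (ha : 0 < a) (hδ : 0 < δ) :
    ∃ C : ℝ, 0 < C ∧ ∀ y₀ y : E, a ≤ ‖y₀‖ → a ≤ ‖y‖ → δ ≤ ‖y₀ - y‖ → ∀ ρ : ℝ, 1 ≤ ρ →
      ∫ x, threeCenterWeight κ ϑ (ρ • y₀) (ρ • y) x ∂μ ≤ C * ρ ^ (-κ) := by
  obtain ⟨ε, hε, hεlt⟩ : ∃ ε : ℝ, 0 < ε ∧ ε < min κ ϑ := exists_between (lt_min hκ (by linarith))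
  obtain ⟨hεκ, hεϑ⟩ := lt_min_iff.1 hεlt
  have hsum : (finrank ℝ E : ℝ) < κ + (2 * ϑ - ε) := by linarith
  obtain ⟨C, hC, h⟩ := exists_integral_twoCenterWeight_smul_le_rpow μ (σ := 2 * ϑ - ε)
    (τ := κ - ε) hκ.le (by linarith) hsum (max_lt hκd (by linarith)).ne (by linarith)
    (by linarith) (by linarith) (by linarith) ha
  refine ⟨2 ^ ϑ * δ ^ (-ε) * (C + C), by positivity, fun y₀ y hy₀ hy hyy ρ hρ => ?_⟩
  have hρ₀ : 0 < ρ := by linarith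
  calc ∫ x, threeCenterWeight κ ϑ (ρ • y₀) (ρ • y) x ∂μ
      ≤ 2 ^ ϑ * (1 + ‖ρ • (y₀ - y)‖) ^ (-ε) *
          ((∫ x, twoCenterWeight κ (2 * ϑ - ε) (ρ • y₀) x ∂μ) +
            ∫ x, twoCenterWeight κ (2 * ϑ - ε) (ρ • y) x ∂μ) := by
        rw [smul_sub]
        exact integral_threeCenterWeight_le_add_twoCenterWeight μ hκ.le hε.le hεϑ.le hsum _ _
    _ ≤ 2 ^ ϑ * (δ ^ (-ε) * ρ ^ (-ε)) * (C * ρ ^ (-(κ - ε)) + C * ρ ^ (-(κ - ε))) := by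
        gcongr
        · exact add_nonneg (integral_nonneg (twoCenterWeight_nonneg _ _ _))
            (integral_nonneg (twoCenterWeight_nonneg _ _ _))
        · exact rpow_neg_le_mul_rpow_neg hδ hρ₀ (mul_le_one_add_norm_smul hρ₀.le hyy) hε.le
        · exact h y₀ hy₀ ρ hρ
        · exact h y hy ρ hρ
    _ = 2 ^ ϑ * δ ^ (-ε) * (C + C) * (ρ ^ (-ε) * ρ ^ (-(κ - ε))) := by ring
    _ = 2 ^ ϑ * δ ^ (-ε) * (C + C) * ρ ^ (-κ) := by rw [← Real.rpow_add hρ₀]; ring_nf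

theorem triple_interaction_integral_estimate_general {κ ϑ a : ℝ} (hκ : 0 ≤ κ) (hϑ : 0 ≤ ϑ)
    (hκϑ : (finrank ℝ E : ℝ) < κ + 2 * ϑ) (ha : 0 < a) :
    (max κ (2 * ϑ) ≠ finrank ℝ E →
      ∃ C : ℝ, 0 < C ∧ ∀ y₀ y : E, a ≤ ‖y₀‖ → a ≤ ‖y‖ → ∀ ρ : ℝ, 1 ≤ ρ →
        Integrable (threeCenterWeight κ ϑ (ρ • y₀) (ρ • y)) μ ∧
        ∫ x, threeCenterWeight κ ϑ (ρ • y₀) (ρ • y) x ∂μ ≤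
          C * ρ ^ (-interactionExponent (finrank ℝ E) κ ϑ)) ∧
    (max κ (2 * ϑ) = finrank ℝ E →
      ∃ C : ℝ, 0 < C ∧ ∀ y₀ y : E, a ≤ ‖y₀‖ → a ≤ ‖y‖ → ∀ ρ : ℝ, 1 ≤ ρ →
        Integrable (threeCenterWeight κ ϑ (ρ • y₀) (ρ • y)) μ ∧
        ∫ x, threeCenterWeight κ ϑ (ρ • y₀) (ρ • y) x ∂μ ≤
          C * ρ ^ (-interactionExponent (finrank ℝ E) κ ϑ) * (1 + Real.log ρ)) ∧
    (2 * ϑ = finrank ℝ E → κ < finrank ℝ E → ∀ d : ℝ, 0 < d →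
      ∃ C : ℝ, 0 < C ∧ ∀ y₀ y : E, a ≤ ‖y₀‖ → a ≤ ‖y‖ → d ≤ ‖y₀ - y‖ → ∀ ρ : ℝ, 1 ≤ ρ →
        Integrable (threeCenterWeight κ ϑ (ρ • y₀) (ρ • y)) μ ∧
        ∫ x, threeCenterWeight κ ϑ (ρ • y₀) (ρ • y) x ∂μ ≤
          C * ρ ^ (-interactionExponent (finrank ℝ E) κ ϑ)) := by
  have hσ : 0 ≤ 2 * ϑ := by positivity
  have hint := integrable_threeCenterWeight μ hκ hϑ hκϑ
  refine ⟨fun hmax => ?_, fun hmax => ?_, fun hϑd hκd δ hδ => ?_⟩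
  · obtain ⟨C, hC, h⟩ := exists_integral_threeCenterWeight_smul_le_rpow μ
      (τ := interactionExponent (finrank ℝ E) κ ϑ) hκ hϑ hκϑ hmax
      (le_min hκ (le_min hσ (by linarith))) (min_le_left _ _)
      ((min_le_right _ _).trans (min_le_left _ _)) ((min_le_right _ _).trans (min_le_right _ _)) ha
    exact ⟨C, hC, fun y₀ y hy₀ hy ρ hρ => ⟨hint _ _, h y₀ y hy₀ hy ρ hρ⟩⟩
  · obtain ⟨hκd, hϑd⟩ := max_le_iff.1 hmax.le
    have hτ : interactionExponent (finrank ℝ E) κ ϑ = κ + 2 * ϑ - finrank ℝ E := by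
      rw [interactionExponent, min_eq_right ((min_le_right _ _).trans (by linarith)),
        min_eq_right (by linarith)]
    obtain ⟨C, hC, h⟩ :=
      exists_integral_threeCenterWeight_smul_le_rpow_mul_log μ hκ hϑ hκϑ hκd hϑd ha
    exact ⟨C, hC, fun y₀ y hy₀ hy ρ hρ => ⟨hint _ _, hτ ▸ h y₀ y hy₀ hy ρ hρ⟩⟩
  · have hτ : interactionExponent (finrank ℝ E) κ ϑ = κ := by
      rw [interactionExponent, min_eq_left (le_min (by linarith) (by linarith))]
    obtain ⟨C, hC, h⟩ := exists_integral_threeCenterWeight_smul_le_rpow_of_le_norm_sub μ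
      (by linarith) hϑd hκd ha hδ
    exact ⟨C, hC, fun y₀ y hy₀ hy hyy ρ hρ =>
      ⟨hint _ _, hτ.symm ▸ h y₀ y hy₀ hy hyy ρ hρ⟩⟩

end Dilation

/-- The constants are chosen before the points `y₀`, `y`: they depend only on `N`, `κ`, `ϑ`,
`a = |y₀|`, `b = |y|` and, in the last part, also on a lower bound `d` of `|y₀ - y|`. -/
theorem triple_interaction_integral_estimate
    (N : ℕ) (hN : 1 ≤ N) (κ ϑ : ℝ) (hκ : 0 < κ) (hϑ : 0 < ϑ) (hκϑ : (N : ℝ) < κ + 2 * ϑ)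
    (a b : ℝ) (ha : 0 < a) (hb : 0 < b) :
    (max κ (2 * ϑ) ≠ (N : ℝ) →
      ∃ C₂ : ℝ, 0 < C₂ ∧ ∀ y₀ y : EuclideanSpace ℝ (Fin N), ‖y₀‖ = a → ‖y‖ = b →
        ∀ ρ : ℝ, 1 ≤ ρ →
          MeasureTheory.Integrable (tripleInteraction κ ϑ ρ y₀ y) ∧
          ∫ x, tripleInteraction κ ϑ ρ y₀ y x ≤ C₂ * ρ ^ (-interactionExponent N κ ϑ)) ∧
    (max κ (2 * ϑ) = (N : ℝ) →
      ∃ C₂ : ℝ, 0 < C₂ ∧ ∀ y₀ y : EuclideanSpace ℝ (Fin N), ‖y₀‖ = a → ‖y‖ = b →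
        ∀ ρ : ℝ, 1 ≤ ρ →
          MeasureTheory.Integrable (tripleInteraction κ ϑ ρ y₀ y) ∧
          ∫ x, tripleInteraction κ ϑ ρ y₀ y x ≤
            C₂ * ρ ^ (-interactionExponent N κ ϑ) * (1 + Real.log ρ)) ∧
    (2 * ϑ = (N : ℝ) → κ < (N : ℝ) → ∀ d : ℝ, 0 < d →
      ∃ C₂ : ℝ, 0 < C₂ ∧ ∀ y₀ y : EuclideanSpace ℝ (Fin N), ‖y₀‖ = a → ‖y‖ = b → d ≤ ‖y₀ - y‖ →
        ∀ ρ : ℝ, 1 ≤ ρ →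
          MeasureTheory.Integrable (tripleInteraction κ ϑ ρ y₀ y) ∧
          ∫ x, tripleInteraction κ ϑ ρ y₀ y x ≤ C₂ * ρ ^ (-interactionExponent N κ ϑ)) := by
  have : Nonempty (Fin N) := ⟨⟨0, hN⟩⟩
  have h := triple_interaction_integral_estimate_general
    (volume : Measure (EuclideanSpace ℝ (Fin N))) hκ.le hϑ.le (by simpa using hκϑ) (lt_min ha hb)
  rw [finrank_euclideanSpace_fin] at h
  obtain ⟨hgeneric, hborderline, hseparated⟩ := h
  have hmina {y₀ : EuclideanSpace ℝ (Fin N)} (h : ‖y₀‖ = a) : min a b ≤ ‖y₀‖ :=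
    (min_le_left a b).trans_eq h.symm
  have hminb {y : EuclideanSpace ℝ (Fin N)} (h : ‖y‖ = b) : min a b ≤ ‖y‖ :=
    (min_le_right a b).trans_eq h.symm
  exact
    ⟨fun hmax => (hgeneric hmax).imp fun C hC =>
      ⟨hC.1, fun y₀ y hy₀ hy => hC.2 y₀ y (hmina hy₀) (hminb hy)⟩,
    fun hmax => (hborderline hmax).imp fun C hC =>
      ⟨hC.1, fun y₀ y hy₀ hy => hC.2 y₀ y (hmina hy₀) (hminb hy)⟩,
    fun hϑN hκN d hd => (hseparated hϑN hκN d hd).imp fun C hC =>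
      ⟨hC.1, fun y₀ y hy₀ hy => hC.2 y₀ y (hmina hy₀) (hminb hy)⟩⟩
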